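/- arXiv:2407.17103 — 2 statements merged into one kernel-verified Lean document; each statement's English description precedes it below -/
import Mathlib

section
/- Let Φ be a quantum channel on n×n complex matrices with Kraus operators {K_j}, let x, x⊥ ∈ ℂⁿ be orthogonal unit vectors, and set Z := (conj(x))(conj(x⊥))† ⊗ 1_n. Then the following are equivalent: (i) u† Z C(Φ) Z† v = 0 for all vectors u, v in the kernel of the Choi matrix C(Φ); (ii) Φ(x⊥ x⊥†) Y x = 0 for every n×n matrix Y in the Hilbert–Schmidt orthogonal complement K_Φ^⊥ of span{K_j}. -/
open Matrix Kronecker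
open scoped ComplexOrder

noncomputable section

/-- The linear map `ρ ↦ A ρ Bᴴ`. -/
def sandwich₂ {m n : ℕ} (A B : Matrix (Fin m) (Fin n) ℂ) :
    Matrix (Fin n) (Fin n) ℂ →ₗ[ℂ] Matrix (Fin m) (Fin m) ℂ where
  toFun ρ := A * ρ * Bᴴ
  map_add' X Y := by simp [Matrix.mul_add, Matrix.add_mul]
  map_smul' c X := by simp [Matrix.mul_smul, Matrix.smul_mul]

/-- The linear map `ρ ↦ A ρ Aᴴ`. -/
def sandwich {m n : ℕ} (A : Matrix (Fin m) (Fin n) ℂ) :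
    Matrix (Fin n) (Fin n) ℂ →ₗ[ℂ] Matrix (Fin m) (Fin m) ℂ :=
  sandwich₂ A A

/-- The Choi matrix `C(Φ) = ∑ⱼₖ Eⱼₖ ⊗ Φ(Eⱼₖ)`. -/
def Choi {n m : ℕ} (Φ : Matrix (Fin n) (Fin n) ℂ →ₗ[ℂ] Matrix (Fin m) (Fin m) ℂ) :
    Matrix (Fin n × Fin m) (Fin n × Fin m) ℂ :=
  ∑ j : Fin n, ∑ k : Fin n,
    (Matrix.single j k (1 : ℂ)) ⊗ₖ Φ (Matrix.single j k (1 : ℂ))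

/-- Vectorization: `vec X = ∑ⱼ eⱼ ⊗ X eⱼ`, i.e. `(vec X) (j, i) = X i j`. -/
def vec {m n : ℕ} (X : Matrix (Fin m) (Fin n) ℂ) : Fin n × Fin m → ℂ :=
  fun p => X p.2 p.1

/-- Complete positivity (via the Choi characterization). -/
def IsCP {n : ℕ} (Φ : Matrix (Fin n) (Fin n) ℂ →ₗ[ℂ] Matrix (Fin n) (Fin n) ℂ) : Prop :=
  (Choi Φ).PosSemidef

/-- Trace preservation. -/
def IsTP {n : ℕ} (Φ : Matrix (Fin n) (Fin n) ℂ →ₗ[ℂ] Matrix (Fin n) (Fin n) ℂ) : Prop :=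
  ∀ ρ, (Φ ρ).trace = ρ.trace

/-- Quantum channel: completely positive and trace preserving. -/
def IsChannel {n : ℕ} (Φ : Matrix (Fin n) (Fin n) ℂ →ₗ[ℂ] Matrix (Fin n) (Fin n) ℂ) : Prop :=
  IsCP Φ ∧ IsTP Φ

/-- `K_λ = 1 - (1 - √(1-λ)) x x†`. -/
def Kmat {n : ℕ} (lam : ℝ) (x : Fin n → ℂ) : Matrix (Fin n) (Fin n) ℂ :=
  1 - ((1 - Real.sqrt (1 - lam) : ℝ) : ℂ) • Matrix.vecMulVec x (star x)

/-- `L_λ = √λ y x†`. -/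
def Lmat {n : ℕ} (lam : ℝ) (x y : Fin n → ℂ) : Matrix (Fin n) (Fin n) ℂ :=
  ((Real.sqrt lam : ℝ) : ℂ) • Matrix.vecMulVec y (star x)

/-- The elementary channel `Ψ_{λ,x,y} = K_λ (·) K_λ† + L_λ (·) L_λ†`. -/
def Psi {n : ℕ} (lam : ℝ) (x y : Fin n → ℂ) :
    Matrix (Fin n) (Fin n) ℂ →ₗ[ℂ] Matrix (Fin n) (Fin n) ℂ :=
  sandwich (Kmat lam x) + sandwich (Lmat lam x y)

/-- For `λ ∈ [0,1)` and `⟨x,y⟩ = 0`, the inverse of `Ψ_{λ,x,y}`: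
`Ψ_{λ,x,y}⁻¹ = K_λ⁻¹ (·) K_λ⁻¹ - (1-λ)⁻¹ L_λ (·) L_λ†`. -/
def PsiInv {n : ℕ} (lam : ℝ) (x y : Fin n → ℂ) :
    Matrix (Fin n) (Fin n) ℂ →ₗ[ℂ] Matrix (Fin n) (Fin n) ℂ :=
  sandwich (Kmat lam x)⁻¹ - (((1 - lam)⁻¹ : ℝ) : ℂ) • sandwich (Lmat lam x y)

/-- `Φ` is conjugation by a unitary. -/
def IsUnitaryConj {n : ℕ} (Φ : Matrix (Fin n) (Fin n) ℂ →ₗ[ℂ] Matrix (Fin n) (Fin n) ℂ) : Prop :=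
  ∃ U ∈ Matrix.unitaryGroup (Fin n) ℂ, ∀ ρ, Φ ρ = U * ρ * Uᴴ

/-- A quantum channel is divisible if it factors into two channels neither of which is
a unitary conjugation. -/
def Divisible {n : ℕ} (Φ : Matrix (Fin n) (Fin n) ℂ →ₗ[ℂ] Matrix (Fin n) (Fin n) ℂ) : Prop :=
  ∃ Φ₁ Φ₂ : Matrix (Fin n) (Fin n) ℂ →ₗ[ℂ] Matrix (Fin n) (Fin n) ℂ,
    IsChannel Φ₁ ∧ IsChannel Φ₂ ∧ Φ = Φ₁ ∘ₗ Φ₂ ∧ ¬ IsUnitaryConj Φ₁ ∧ ¬ IsUnitaryConj Φ₂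

/-- `Z = conj(x) conj(x⊥)† ⊗ 1`. -/
def Zmat {n : ℕ} (x xp : Fin n → ℂ) : Matrix (Fin n × Fin n) (Fin n × Fin n) ℂ :=
  (Matrix.vecMulVec (star x) xp) ⊗ₖ (1 : Matrix (Fin n) (Fin n) ℂ)

/-- The matrix whose columns are the vectorized Kraus operators. -/
def krausColumns {n r : ℕ} (K : Fin r → Matrix (Fin n) (Fin n) ℂ) :
    Matrix (Fin n × Fin n) (Fin r) ℂ :=
  Matrix.of fun p l => _root_.vec (K l) p

/-- The matrix whose columns are the images `K l y` of a vector under the Kraus operators. -/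
def krausImages {n r : ℕ} (K : Fin r → Matrix (Fin n) (Fin n) ℂ) (y : Fin n → ℂ) :
    Matrix (Fin n) (Fin r) ℂ :=
  Matrix.of fun i l => (K l *ᵥ y) i

theorem choi_apply {n m : ℕ}
    (Φ : Matrix (Fin n) (Fin n) ℂ →ₗ[ℂ] Matrix (Fin m) (Fin m) ℂ) (p q : Fin n × Fin m) :
    Choi Φ p q = Φ (Matrix.single p.1 q.1 1) p.2 q.2 := by
  simp only [Choi, Matrix.sum_apply, Matrix.kroneckerMap_apply, Matrix.single_apply]
  rw [Finset.sum_eq_single p.1, Finset.sum_eq_single q.1] <;> simp +contextual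

theorem choi_eq_krausColumns_mul {n r : ℕ} (K : Fin r → Matrix (Fin n) (Fin n) ℂ)
    (Φ : Matrix (Fin n) (Fin n) ℂ →ₗ[ℂ] Matrix (Fin n) (Fin n) ℂ)
    (hKraus : ∀ ρ, Φ ρ = ∑ j, K j * ρ * (K j)ᴴ) :
    Choi Φ = krausColumns K * (krausColumns K)ᴴ := by
  ext p q
  rw [choi_apply, hKraus, Matrix.sum_apply, Matrix.mul_apply]
  refine Finset.sum_congr rfl fun l _ => ?_
  simp [krausColumns, _root_.vec, Matrix.mul_apply, Matrix.single_apply, ite_and]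

theorem map_vecMulVec_eq_krausImages_mul {n r : ℕ} (K : Fin r → Matrix (Fin n) (Fin n) ℂ)
    (Φ : Matrix (Fin n) (Fin n) ℂ →ₗ[ℂ] Matrix (Fin n) (Fin n) ℂ)
    (hKraus : ∀ ρ, Φ ρ = ∑ j, K j * ρ * (K j)ᴴ) (y : Fin n → ℂ) :
    Φ (Matrix.vecMulVec y (star y)) = krausImages K y * (krausImages K y)ᴴ := by
  ext i k
  rw [hKraus, Matrix.sum_apply, Matrix.mul_apply]
  refine Finset.sum_congr rfl fun l _ => ?_
  rw [Matrix.mul_vecMulVec, Matrix.vecMulVec_mul, Matrix.vecMulVec_apply, ← Matrix.star_mulVec]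
  rfl

theorem krausColumns_conjTranspose_mulVec_vec {n r : ℕ}
    (K : Fin r → Matrix (Fin n) (Fin n) ℂ) (Y : Matrix (Fin n) (Fin n) ℂ) (l : Fin r) :
    ((krausColumns K)ᴴ *ᵥ _root_.vec Y) l = ((K l)ᴴ * Y).trace := by
  simp [krausColumns, _root_.vec, Matrix.mulVec, dotProduct, Matrix.trace, Matrix.mul_apply,
    Fintype.sum_prod_type]

theorem zmat_conjTranspose_mulVec_vec {n : ℕ} (x y : Fin n → ℂ)
    (Y : Matrix (Fin n) (Fin n) ℂ) :
    (Zmat x y)ᴴ *ᵥ _root_.vec Y = _root_.vec (Matrix.vecMulVec (Y *ᵥ x) (star y)) := by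
  ext ⟨a, i⟩
  simp only [Zmat, _root_.vec, Matrix.mulVec, dotProduct, Matrix.vecMulVec_apply,
    Fintype.sum_prod_type, Finset.sum_mul]
  refine Finset.sum_congr rfl fun b _ => ?_
  rw [Finset.sum_eq_single i]
  · simp [Matrix.vecMulVec_apply]
    ring
  · intro k _ hk
    simp [Matrix.one_apply_ne hk]
  · simp

theorem krausColumns_conjTranspose_mulVec_zmat {n r : ℕ}
    (K : Fin r → Matrix (Fin n) (Fin n) ℂ) (x y : Fin n → ℂ) (Y : Matrix (Fin n) (Fin n) ℂ) :
    (krausColumns K)ᴴ *ᵥ ((Zmat x y)ᴴ *ᵥ _root_.vec Y) = (krausImages K y)ᴴ *ᵥ (Y *ᵥ x) := by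
  ext l
  rw [zmat_conjTranspose_mulVec_vec, krausColumns_conjTranspose_mulVec_vec,
    Matrix.mul_vecMulVec, Matrix.trace_vecMulVec, dotProduct_comm,
    Matrix.dotProduct_mulVec, ← Matrix.star_mulVec]
  rfl

theorem choi_mulVec_vec_eq_zero_iff {n r : ℕ} (K : Fin r → Matrix (Fin n) (Fin n) ℂ)
    (Φ : Matrix (Fin n) (Fin n) ℂ →ₗ[ℂ] Matrix (Fin n) (Fin n) ℂ)
    (hKraus : ∀ ρ, Φ ρ = ∑ j, K j * ρ * (K j)ᴴ) (Y : Matrix (Fin n) (Fin n) ℂ) :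
    Choi Φ *ᵥ _root_.vec Y = 0 ↔ ∀ j, ((K j)ᴴ * Y).trace = 0 := by
  rw [choi_eq_krausColumns_mul K Φ hKraus, Matrix.self_mul_conjTranspose_mulVec_eq_zero,
    funext_iff]
  simp only [krausColumns_conjTranspose_mulVec_vec, Pi.zero_apply]

theorem dotProduct_zmat_mul_choi_mulVec_vec {n r : ℕ} (K : Fin r → Matrix (Fin n) (Fin n) ℂ)
    (Φ : Matrix (Fin n) (Fin n) ℂ →ₗ[ℂ] Matrix (Fin n) (Fin n) ℂ)
    (hKraus : ∀ ρ, Φ ρ = ∑ j, K j * ρ * (K j)ᴴ) (x y : Fin n → ℂ)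
    (X Y : Matrix (Fin n) (Fin n) ℂ) :
    star (_root_.vec X) ⬝ᵥ ((Zmat x y * Choi Φ * (Zmat x y)ᴴ) *ᵥ _root_.vec Y) =
      star ((krausImages K y)ᴴ *ᵥ (X *ᵥ x)) ⬝ᵥ ((krausImages K y)ᴴ *ᵥ (Y *ᵥ x)) := by
  rw [← krausColumns_conjTranspose_mulVec_zmat, ← krausColumns_conjTranspose_mulVec_zmat,
    choi_eq_krausColumns_mul K Φ hKraus]
  simp only [Matrix.star_mulVec, Matrix.conjTranspose_conjTranspose, Matrix.dotProduct_mulVec,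
    Matrix.vecMul_vecMul, Matrix.mul_assoc]

/-- equivalence of the kernel condition `u† Z C(Φ) Z† v = 0` on `ker C(Φ)`
with `Φ(x⊥ x⊥†) Y x = 0` for all `Y ∈ K_Φ^⊥`. -/
theorem kernel_condition_equiv (n r : ℕ) (K : Fin r → Matrix (Fin n) (Fin n) ℂ)
    (Φ : Matrix (Fin n) (Fin n) ℂ →ₗ[ℂ] Matrix (Fin n) (Fin n) ℂ)
    (hKraus : ∀ ρ, Φ ρ = ∑ j, K j * ρ * (K j)ᴴ) (hΦ : IsChannel Φ)
    (x xp : Fin n → ℂ)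
    (hx : star x ⬝ᵥ x = 1) (hxp : star xp ⬝ᵥ xp = 1) (horth : star x ⬝ᵥ xp = 0) :
    (∀ u v : Fin n × Fin n → ℂ, Choi Φ *ᵥ u = 0 → Choi Φ *ᵥ v = 0 →
        star u ⬝ᵥ ((Zmat x xp * Choi Φ * (Zmat x xp)ᴴ) *ᵥ v) = 0) ↔
    (∀ Y : Matrix (Fin n) (Fin n) ℂ, (∀ j, ((K j)ᴴ * Y).trace = 0) →
        (Φ (Matrix.vecMulVec xp (star xp)) * Y) *ᵥ x = 0) := by
  have h_iff (Y : Matrix (Fin n) (Fin n) ℂ) :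
      (Φ (Matrix.vecMulVec xp (star xp)) * Y) *ᵥ x = 0 ↔
        (krausImages K xp)ᴴ *ᵥ (Y *ᵥ x) = 0 := by
    rw [map_vecMulVec_eq_krausImages_mul K Φ hKraus, ← Matrix.mulVec_mulVec,
      Matrix.self_mul_conjTranspose_mulVec_eq_zero]
  constructor
  · intro h Y hY
    have hY' := (choi_mulVec_vec_eq_zero_iff K Φ hKraus Y).2 hY
    have h0 := h _ _ hY' hY'
    rw [dotProduct_zmat_mul_choi_mulVec_vec K Φ hKraus] at h0
    exact (h_iff Y).2 (dotProduct_star_self_eq_zero.1 h0)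
  · intro h u v _ hv
    obtain ⟨X, rfl⟩ : ∃ X : Matrix (Fin n) (Fin n) ℂ, _root_.vec X = u :=
      ⟨Matrix.of fun i a => u (a, i), rfl⟩
    obtain ⟨Y, rfl⟩ : ∃ Y : Matrix (Fin n) (Fin n) ℂ, _root_.vec Y = v :=
      ⟨Matrix.of fun i a => v (a, i), rfl⟩
    have hY := (h_iff Y).1 (h Y ((choi_mulVec_vec_eq_zero_iff K Φ hKraus Y).1 hv))
    rw [dotProduct_zmat_mul_choi_mulVec_vec K Φ hKraus, hY, dotProduct_zero]

end
end

section
/- Let Φ be a quantum channel on n×n complex matrices with Kraus operators {K_j}, and suppose there exist orthogonal unit vectors x, x⊥ ∈ ℂⁿ such that Φ(x⊥ x⊥†) Z x = 0 and Φ(x x†) Z x = 0 for every n×n matrix Z in the Hilbert–Schmidt orthogonal complement K_Φ^⊥ of span{K_j}. Then Φ is divisible: there exist quantum channels Φ₁, Φ₂, neither of which is of the form U(·)U† for a unitary U, with Φ = Φ₁ ∘ Φ₂. -/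
open Matrix Kronecker
open scoped ComplexOrder

noncomputable section

/-- The damping map `ρ ↦ (1 + (a - 1) x x†) ρ (1 + (a - 1) x x†)† + (1 - a²) (y x†) ρ (y x†)†`. -/
def damping {n : ℕ} (a : ℝ) (x y : Fin n → ℂ) :
    Matrix (Fin n) (Fin n) ℂ →ₗ[ℂ] Matrix (Fin n) (Fin n) ℂ :=
  sandwich (1 + ((a - 1 : ℝ) : ℂ) • Matrix.vecMulVec x (star x)) +
    ((1 - a ^ 2 : ℝ) : ℂ) • sandwich (Matrix.vecMulVec y (star x))

section Choi

variable {n : ℕ}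

lemma sandwich_apply (A ρ : Matrix (Fin n) (Fin n) ℂ) : sandwich A ρ = A * ρ * Aᴴ := rfl

lemma sandwich_comp (A B : Matrix (Fin n) (Fin n) ℂ) :
    sandwich A ∘ₗ sandwich B = sandwich (A * B) := by
  ext1 ρ
  simp [sandwich_apply, Matrix.mul_assoc]

lemma Choi_apply (Φ : Matrix (Fin n) (Fin n) ℂ →ₗ[ℂ] Matrix (Fin n) (Fin n) ℂ)
    (p q : Fin n × Fin n) :
    Choi Φ p q = Φ (Matrix.single p.1 q.1 1) p.2 q.2 := by
  simp [Choi, Matrix.sum_apply, Matrix.single_apply, ite_and]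

lemma Choi_add (Φ Ψ : Matrix (Fin n) (Fin n) ℂ →ₗ[ℂ] Matrix (Fin n) (Fin n) ℂ) :
    Choi (Φ + Ψ) = Choi Φ + Choi Ψ := by
  ext p q
  simp [Choi_apply]

lemma Choi_smul (c : ℂ) (Φ : Matrix (Fin n) (Fin n) ℂ →ₗ[ℂ] Matrix (Fin n) (Fin n) ℂ) :
    Choi (c • Φ) = c • Choi Φ := by
  ext p q
  simp [Choi_apply]

lemma Choi_sum {ι : Type*} (s : Finset ι)
    (Φ : ι → Matrix (Fin n) (Fin n) ℂ →ₗ[ℂ] Matrix (Fin n) (Fin n) ℂ) :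
    Choi (∑ i ∈ s, Φ i) = ∑ i ∈ s, Choi (Φ i) := by
  ext p q
  simp [Choi_apply, Matrix.sum_apply]

lemma Choi_sandwich (A : Matrix (Fin n) (Fin n) ℂ) :
    Choi (sandwich A) = Matrix.vecMulVec (_root_.vec A) (star (_root_.vec A)) := by
  ext p q
  simp [Choi_apply, sandwich_apply, Matrix.mul_apply, Matrix.single_apply, ite_and,
    Matrix.vecMulVec_apply, _root_.vec]

lemma isCP_add {Φ Ψ : Matrix (Fin n) (Fin n) ℂ →ₗ[ℂ] Matrix (Fin n) (Fin n) ℂ}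
    (hΦ : IsCP Φ) (hΨ : IsCP Ψ) : IsCP (Φ + Ψ) := by
  rw [IsCP, Choi_add]
  exact Matrix.PosSemidef.add hΦ hΨ

lemma isCP_smul {c : ℝ} (hc : 0 ≤ c)
    {Φ : Matrix (Fin n) (Fin n) ℂ →ₗ[ℂ] Matrix (Fin n) (Fin n) ℂ}
    (hΦ : IsCP Φ) : IsCP ((c : ℂ) • Φ) := by
  rw [IsCP, Choi_smul]
  exact Matrix.PosSemidef.smul hΦ (by exact_mod_cast hc)

lemma isCP_sandwich (A : Matrix (Fin n) (Fin n) ℂ) : IsCP (sandwich A) := by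
  rw [IsCP, Choi_sandwich]
  exact Matrix.posSemidef_vecMulVec_self_star _

/-- The quadratic form of a rank-one projection. -/
lemma dotProduct_vecMulVec_mulVec {ι : Type*} [Fintype ι] (u v : ι → ℂ) :
    star v ⬝ᵥ (Matrix.vecMulVec u (star u) *ᵥ v) = ((‖star u ⬝ᵥ v‖ ^ 2 : ℝ) : ℂ) := by
  rw [Matrix.vecMulVec_mulVec, dotProduct_smul, op_smul_eq_smul, smul_eq_mul,
    show star v ⬝ᵥ u = star (star u ⬝ᵥ v) by rw [← star_dotProduct_star]; simp [dotProduct_comm]]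
  simpa using Complex.mul_conj' (star u ⬝ᵥ v)

end Choi

section Damping

variable {n : ℕ} {x y : Fin n → ℂ}

lemma damping_one : damping 1 x y = LinearMap.id := by
  ext1 ρ
  simp [damping, sandwich_apply]

lemma damping_comp (hx : star x ⬝ᵥ x = 1) (hxy : star x ⬝ᵥ y = 0) (a b : ℝ) :
    damping a x y ∘ₗ damping b x y = damping (a * b) x y := by
  have hPP : Matrix.vecMulVec x (star x) * Matrix.vecMulVec x (star x)
      = Matrix.vecMulVec x (star x) := by
    simp [Matrix.vecMulVec_mul_vecMulVec, hx]
  have hPN : Matrix.vecMulVec x (star x) * Matrix.vecMulVec y (star x) = 0 := by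
    simp [Matrix.vecMulVec_mul_vecMulVec, hxy]
  have hNP : Matrix.vecMulVec y (star x) * Matrix.vecMulVec x (star x)
      = Matrix.vecMulVec y (star x) := by
    simp [Matrix.vecMulVec_mul_vecMulVec, hx]
  have hNN : Matrix.vecMulVec y (star x) * Matrix.vecMulVec y (star x) = 0 := by
    simp [Matrix.vecMulVec_mul_vecMulVec, hxy]
  unfold damping
  generalize Matrix.vecMulVec x (star x) = P at *
  generalize Matrix.vecMulVec y (star x) = N at *
  simp only [LinearMap.add_comp, LinearMap.comp_add, LinearMap.smul_comp, LinearMap.comp_smul,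
    sandwich_comp]
  have h1 : (1 + ((a - 1 : ℝ) : ℂ) • P) * (1 + ((b - 1 : ℝ) : ℂ) • P)
      = 1 + ((a * b - 1 : ℝ) : ℂ) • P := by
    simp only [mul_add, add_mul, one_mul, mul_one, smul_mul_assoc, mul_smul_comm, hPP]
    push_cast
    module
  have h2 : (1 + ((a - 1 : ℝ) : ℂ) • P) * N = N := by
    simp [add_mul, hPN]
  have h3 : N * (1 + ((b - 1 : ℝ) : ℂ) • P) = (b : ℂ) • N := by
    simp only [mul_add, mul_one, mul_smul_comm, hNP]
    push_cast
    module
  have h4 : sandwich ((b : ℂ) • N) = ((b : ℂ) ^ 2) • sandwich N := by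
    ext1 ρ
    rw [LinearMap.smul_apply, sandwich_apply, sandwich_apply, conjTranspose_smul, smul_mul_assoc,
      smul_mul_assoc, mul_smul_comm, smul_smul, Complex.star_def, Complex.conj_ofReal, sq]
  have h5 : sandwich (0 : Matrix (Fin n) (Fin n) ℂ) = 0 := by
    ext1 ρ
    simp [sandwich_apply]
  rw [h1, h2, h3, h4, hNN, h5]
  push_cast
  module

lemma isCP_damping {a : ℝ} (ha : a ^ 2 ≤ 1) : IsCP (damping a x y) :=
  isCP_add (isCP_sandwich _) (isCP_smul (sub_nonneg.2 ha) (isCP_sandwich _))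

lemma isTP_damping (hx : star x ⬝ᵥ x = 1) (hy : star y ⬝ᵥ y = 1) (a : ℝ) :
    IsTP (damping a x y) := by
  intro ρ
  have hPP : Matrix.vecMulVec x (star x) * Matrix.vecMulVec x (star x)
      = Matrix.vecMulVec x (star x) := by
    simp [Matrix.vecMulVec_mul_vecMulVec, hx]
  have hNN : Matrix.vecMulVec x (star y) * Matrix.vecMulVec y (star x)
      = Matrix.vecMulVec x (star x) := by
    simp [Matrix.vecMulVec_mul_vecMulVec, hy]
  simp only [damping, LinearMap.add_apply, LinearMap.smul_apply, sandwich_apply,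
    Matrix.trace_add, Matrix.trace_smul, conjTranspose_add, conjTranspose_smul,
    conjTranspose_vecMulVec, star_star, conjTranspose_one]
  rw [Matrix.trace_mul_cycle, Matrix.trace_mul_cycle (vecMulVec y (star x)), hNN]
  simp only [mul_add, add_mul, one_mul, mul_one, smul_mul_assoc, mul_smul_comm, hPP,
    Matrix.trace_add, Matrix.trace_smul, smul_eq_mul, Complex.star_def, Complex.conj_ofReal]
  push_cast
  ring

lemma damping_vecMulVec_self (hx : star x ⬝ᵥ x = 1) (a : ℝ) :
    damping a x y (Matrix.vecMulVec x (star x)) =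
      ((a ^ 2 : ℝ) : ℂ) • Matrix.vecMulVec x (star x) +
        ((1 - a ^ 2 : ℝ) : ℂ) • Matrix.vecMulVec y (star y) := by
  simp only [damping, LinearMap.add_apply, LinearMap.smul_apply, sandwich_apply,
    conjTranspose_add, conjTranspose_smul, conjTranspose_vecMulVec, star_star, conjTranspose_one,
    mul_add, add_mul, one_mul, mul_one, smul_mul_assoc, mul_smul_comm,
    Matrix.vecMulVec_mul_vecMulVec, hx, one_smul, Complex.star_def, Complex.conj_ofReal]
  push_cast
  module

/-- A proper damping map followed by a unitary conjugation is not a unitary conjugation, since it does not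
send the projection onto `x` to a projection. -/
lemma not_isUnitaryConj_sandwich_comp_damping (hx : star x ⬝ᵥ x = 1) (hxy : star x ⬝ᵥ y = 0)
    {a : ℝ} (ha₀ : 0 < a) (ha₁ : a < 1) {U : Matrix (Fin n) (Fin n) ℂ}
    (hU : U ∈ Matrix.unitaryGroup (Fin n) ℂ) :
    ¬ IsUnitaryConj (sandwich U ∘ₗ damping a x y) := by
  rintro ⟨V, hV, h⟩
  have hU' : Uᴴ * U = 1 := Matrix.mem_unitaryGroup_iff'.1 hU
  have hV' : Vᴴ * V = 1 := Matrix.mem_unitaryGroup_iff'.1 hV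
  have hyx : star y ⬝ᵥ x = 0 := by
    rw [dotProduct_comm, ← star_star x, star_dotProduct_star, dotProduct_comm, hxy, star_zero]
  have hPP : Matrix.vecMulVec x (star x) * Matrix.vecMulVec x (star x)
      = Matrix.vecMulVec x (star x) := by
    simp [Matrix.vecMulVec_mul_vecMulVec, hx]
  have hX := h (Matrix.vecMulVec x (star x))
  rw [LinearMap.comp_apply, sandwich_apply] at hX
  generalize hXdef : damping a x y (Matrix.vecMulVec x (star x)) = X at hX
  rw [damping_vecMulVec_self hx] at hXdef
  have hidem : X * X = X := by
    have e : ∀ W : Matrix (Fin n) (Fin n) ℂ, Uᴴ * (U * W * Uᴴ) * U = W := fun W => by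
      calc _ = (Uᴴ * U) * W * (Uᴴ * U) := by noncomm_ring
        _ = W := by simp [hU']
    have e2 : ∀ (S W : Matrix (Fin n) (Fin n) ℂ), Sᴴ * S = 1 →
        (S * W * Sᴴ) * (S * W * Sᴴ) = S * (W * W) * Sᴴ := fun S W hS => by
      calc _ = S * W * (Sᴴ * S) * W * Sᴴ := by noncomm_ring
        _ = _ := by rw [hS]; noncomm_ring
    rw [← e (X * X), ← e2 U X hU', hX, e2 V _ hV', hPP, ← hX, e]
  have hXx : X *ᵥ x = ((a ^ 2 : ℝ) : ℂ) • x := by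
    simp [← hXdef, Matrix.add_mulVec, Matrix.smul_mulVec, Matrix.vecMulVec_mulVec, hx, hyx]
  have key := congrArg (fun M => star x ⬝ᵥ (M *ᵥ x)) hidem
  simp only [← Matrix.mulVec_mulVec, hXx, Matrix.mulVec_smul, dotProduct_smul, hx,
    smul_eq_mul, mul_one] at key
  norm_cast at key
  nlinarith [pow_pos ha₀ 2, mul_pos (pow_pos ha₀ 2) (sub_pos.2 ha₁)]

end Damping

section Kraus

variable {n : ℕ} {ι : Type*}

/-- A matrix orthogonal to the Hilbert–Schmidt orthogonal complement of a family lies in its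
span. -/
lemma mem_span_range_of_trace {K : ι → Matrix (Fin n) (Fin n) ℂ} {Y : Matrix (Fin n) (Fin n) ℂ}
    (h : ∀ Z : Matrix (Fin n) (Fin n) ℂ, (∀ j, ((K j)ᴴ * Z).trace = 0) → (Yᴴ * Z).trace = 0) :
    Y ∈ Submodule.span ℂ (Set.range K) := by
  by_contra hY
  obtain ⟨f, hfY, hf⟩ := Submodule.exists_le_ker_of_notMem hY
  have key : ∀ M : Matrix (Fin n) (Fin n) ℂ,
      (Mᴴ * Matrix.of fun i j => star (f (Matrix.single i j 1))).trace = star (f M) := fun M => by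
    conv_rhs => rw [Matrix.matrix_eq_sum_single M]
    have hs : ∀ i j, f (Matrix.single i j (M i j)) = M i j * f (Matrix.single i j 1) :=
      fun i j => by
        rw [← smul_eq_mul, ← map_smul, Matrix.smul_single, smul_eq_mul, mul_one]
    simp only [map_sum, hs, star_sum, star_mul', Matrix.trace, Matrix.diag_apply,
      Matrix.mul_apply, conjTranspose_apply, Matrix.of_apply]
    exact Finset.sum_comm
  refine hfY (star_eq_zero.1 ((key Y).symm.trans (h _ fun j => ?_)))
  rw [key, star_eq_zero]
  exact hf (Submodule.subset_span ⟨j, rfl⟩)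

/-- If `Φ(y y†) w = 0` for the map `Φ` with Kraus operators `K j`, then `w` is orthogonal to every
`K j y`. -/
lemma dotProduct_kraus_eq_zero [Fintype ι] {K : ι → Matrix (Fin n) (Fin n) ℂ} {y w : Fin n → ℂ}
    (h : (∑ j, K j * Matrix.vecMulVec y (star y) * (K j)ᴴ) *ᵥ w = 0) (j : ι) :
    star (K j *ᵥ y) ⬝ᵥ w = 0 := by
  have hK : ∀ j, K j * Matrix.vecMulVec y (star y) * (K j)ᴴ
      = Matrix.vecMulVec (K j *ᵥ y) (star (K j *ᵥ y)) := fun j => by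
    rw [Matrix.mul_vecMulVec, Matrix.vecMulVec_mul, Matrix.star_mulVec]
  have hq := congrArg (star w ⬝ᵥ ·) h
  simp only [hK, Matrix.sum_mulVec, dotProduct_sum, dotProduct_vecMulVec_mulVec,
    dotProduct_zero] at hq
  norm_cast at hq
  rw [Finset.sum_eq_zero_iff_of_nonneg fun _ _ => by positivity] at hq
  simpa using hq j (Finset.mem_univ j)

/-- The divisibility hypothesis places every `K j y x†` in the Kraus subspace. -/
lemma exists_kraus_mul_vecMulVec_eq_sum [Fintype ι] {K : ι → Matrix (Fin n) (Fin n) ℂ}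
    {x y : Fin n → ℂ}
    (h : ∀ Z : Matrix (Fin n) (Fin n) ℂ, (∀ j, ((K j)ᴴ * Z).trace = 0) →
      ((∑ j, K j * Matrix.vecMulVec y (star y) * (K j)ᴴ) * Z) *ᵥ x = 0) :
    ∃ A : ι → ι → ℂ, ∀ j, K j * Matrix.vecMulVec y (star x) = ∑ k, A j k • K k := by
  have hmem : ∀ j, ∃ c : ι → ℂ, ∑ k, c k • K k = K j * Matrix.vecMulVec y (star x) := fun j => by
    refine (Submodule.mem_span_range_iff_exists_fun ℂ).1 (mem_span_range_of_trace fun Z hZ => ?_)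
    have hw := h Z hZ
    rw [← Matrix.mulVec_mulVec] at hw
    rw [Matrix.mul_vecMulVec, conjTranspose_vecMulVec, star_star, Matrix.vecMulVec_mul,
      Matrix.trace_vecMulVec, dotProduct_comm, ← Matrix.dotProduct_mulVec]
    exact dotProduct_kraus_eq_zero hw j
  choose A hA using hmem
  exact ⟨A, fun j => (hA j).symm⟩

lemma sum_norm_sq_sum_mul_le [Fintype ι] (A : ι → ι → ℂ) (w : ι → ℂ) :
    ∑ j, ‖∑ k, A j k * w k‖ ^ 2 ≤ (∑ j, ∑ k, ‖A j k‖ ^ 2) * ∑ k, ‖w k‖ ^ 2 := by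
  rw [Finset.sum_mul]
  refine Finset.sum_le_sum fun j _ => ?_
  calc ‖∑ k, A j k * w k‖ ^ 2 ≤ (∑ k, ‖A j k‖ * ‖w k‖) ^ 2 := by
        gcongr
        exact (norm_sum_le _ _).trans_eq (by simp)
    _ ≤ _ := Finset.sum_mul_sq_le_sq_mul_sq _ _ _

/-- For a small enough perturbation the quadratic form `‖w + ε A w‖² - ((1 + ε)² - 1) ‖B w‖²`
is nonnegative. -/
lemma exists_perturbation_nonneg [Fintype ι] (A B : ι → ι → ℂ) :
    ∃ ε : ℝ, 0 < ε ∧ ∀ w : ι → ℂ,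
      0 ≤ ∑ j, ‖w j + (ε : ℂ) * ∑ k, A j k * w k‖ ^ 2
        + (1 - (1 + ε) ^ 2) * ∑ j, ‖∑ k, B j k * w k‖ ^ 2 := by
  set a := ∑ j, ∑ k, ‖A j k‖ ^ 2
  set b := ∑ j, ∑ k, ‖B j k‖ ^ 2
  have ha : 0 ≤ a := by positivity
  have hb : 0 ≤ b := by positivity
  have hD : 0 < 1 + 2 * a + 6 * b := by positivity
  refine ⟨(1 + 2 * a + 6 * b)⁻¹, inv_pos.2 hD, fun w => ?_⟩
  set ε := (1 + 2 * a + 6 * b)⁻¹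
  have hε0 : 0 < ε := inv_pos.2 hD
  have hεD : ε * (1 + 2 * a + 6 * b) = 1 := inv_mul_cancel₀ hD.ne'
  have hε1 : ε ≤ 1 := inv_le_one_of_one_le₀ (by linarith)
  set S := ∑ k, ‖w k‖ ^ 2
  have hS : 0 ≤ S := by positivity
  set α := ∑ j, ‖∑ k, A j k * w k‖ ^ 2
  set β := ∑ j, ‖∑ k, B j k * w k‖ ^ 2
  have hA : α ≤ a * S := sum_norm_sq_sum_mul_le A w
  have hB : β ≤ b * S := sum_norm_sq_sum_mul_le B w
  have hpar : S ≤ 2 * ∑ j, ‖w j + (ε : ℂ) * ∑ k, A j k * w k‖ ^ 2 + 2 * (ε ^ 2 * α) := by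
    simp only [S, α, Finset.mul_sum, ← Finset.sum_add_distrib]
    refine Finset.sum_le_sum fun j _ => ?_
    simp only [← Finset.mul_sum]
    have h1 : ‖w j‖ ≤ ‖w j + (ε : ℂ) * ∑ k, A j k * w k‖ + ε * ‖∑ k, A j k * w k‖ := by
      have := norm_sub_le (w j + (ε : ℂ) * ∑ k, A j k * w k) ((ε : ℂ) * ∑ k, A j k * w k)
      rwa [add_sub_cancel_right, norm_mul, Complex.norm_real, Real.norm_of_nonneg hε0.le] at this
    have h2 := pow_le_pow_left₀ (norm_nonneg _) h1 2
    nlinarith [sq_nonneg (‖w j + (ε : ℂ) * ∑ k, A j k * w k‖ - ε * ‖∑ k, A j k * w k‖)]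
  have hβ : 0 ≤ β := by positivity
  have hα : 0 ≤ α := by positivity
  clear_value α β S ε a b
  have h1 : ε ^ 2 * α ≤ ε * (a * S) := by
    calc ε ^ 2 * α ≤ ε * α := by gcongr; nlinarith
      _ ≤ _ := by gcongr
  have h2 : ((1 + ε) ^ 2 - 1) * β ≤ 3 * ε * (b * S) := by
    calc ((1 + ε) ^ 2 - 1) * β ≤ 3 * ε * β := by gcongr; nlinarith
      _ ≤ _ := by gcongr
  have h3 : ε * (a * S) + 3 * ε * (b * S) ≤ S / 2 := by
    have : ε * (a * S) + 3 * ε * (b * S) = (ε * (1 + 2 * a + 6 * b) - ε) * S / 2 := by ring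
    rw [this, hεD]
    nlinarith
  linarith

/-- Under the divisibility hypothesis, a map with Kraus operators `K j` precomposed with the inverse
of a weak enough damping map is still completely positive. -/
lemma exists_isCP_comp_damping [Fintype ι] {K : ι → Matrix (Fin n) (Fin n) ℂ} {x y : Fin n → ℂ}
    {A B : ι → ι → ℂ} (hA : ∀ j, K j * Matrix.vecMulVec x (star x) = ∑ k, A j k • K k)
    (hB : ∀ j, K j * Matrix.vecMulVec y (star x) = ∑ k, B j k • K k) :
    ∃ a : ℝ, 1 < a ∧ IsCP ((∑ j, sandwich (K j)) ∘ₗ damping a x y) := by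
  obtain ⟨ε, hε, hpos⟩ := exists_perturbation_nonneg (fun j k => star (A j k))
    (fun j k => star (B j k))
  refine ⟨1 + ε, by linarith, ?_⟩
  have hC : Choi ((∑ j, sandwich (K j)) ∘ₗ damping (1 + ε) x y) =
      ∑ j, Choi (sandwich (K j + (ε : ℂ) • ∑ k, A j k • K k)) +
        ((1 - (1 + ε) ^ 2 : ℝ) : ℂ) • ∑ j, Choi (sandwich (∑ k, B j k • K k)) := by
    rw [← Choi_sum, ← Choi_sum, ← Choi_smul, ← Choi_add]
    congr 1
    have hsum : ∀ Ψ : Matrix (Fin n) (Fin n) ℂ →ₗ[ℂ] Matrix (Fin n) (Fin n) ℂ,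
        (∑ j, sandwich (K j)) ∘ₗ Ψ = ∑ j, sandwich (K j) ∘ₗ Ψ := fun Ψ => by
      ext1 ρ
      simp
    rw [damping, LinearMap.comp_add, LinearMap.comp_smul, hsum, hsum]
    simp only [sandwich_comp, mul_add, mul_one, mul_smul_comm, hA, hB, add_sub_cancel_left]
  have hvec : ∀ (v : Fin n × Fin n → ℂ) (c : ι → ℂ),
      star (_root_.vec (∑ k, c k • K k)) ⬝ᵥ v
        = ∑ k, star (c k) * (star (_root_.vec (K k)) ⬝ᵥ v) := fun v c => by
    have : _root_.vec (∑ k, c k • K k) = ∑ k, c k • _root_.vec (K k) := by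
      ext p
      simp [_root_.vec, Matrix.sum_apply]
    simp [this, star_sum, sum_dotProduct, smul_dotProduct]
  have hvec_add : ∀ (v : Fin n × Fin n → ℂ) (M N : Matrix (Fin n) (Fin n) ℂ),
      star (_root_.vec (M + (ε : ℂ) • N)) ⬝ᵥ v
        = star (_root_.vec M) ⬝ᵥ v + (ε : ℂ) * (star (_root_.vec N) ⬝ᵥ v) := fun v M N => by
    have : _root_.vec (M + (ε : ℂ) • N) = _root_.vec M + (ε : ℂ) • _root_.vec N := rfl
    rw [this, star_add, star_smul, add_dotProduct, smul_dotProduct, Complex.star_def,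
      Complex.conj_ofReal, smul_eq_mul]
  rw [IsCP, hC]
  refine Matrix.PosSemidef.of_dotProduct_mulVec_nonneg ?_ fun v => ?_
  · simp [Matrix.IsHermitian, Choi_sandwich, conjTranspose_vecMulVec, conjTranspose_sum]
  · simp only [Choi_sandwich, Matrix.add_mulVec, Matrix.smul_mulVec, Matrix.sum_mulVec,
      dotProduct_add, dotProduct_smul, dotProduct_sum, dotProduct_vecMulVec_mulVec, hvec_add,
      hvec, smul_eq_mul]
    exact_mod_cast hpos fun k => star (_root_.vec (K k)) ⬝ᵥ v

end Kraus

lemma isTP_comp {n : ℕ} {Φ Ψ : Matrix (Fin n) (Fin n) ℂ →ₗ[ℂ] Matrix (Fin n) (Fin n) ℂ}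
    (hΦ : IsTP Φ) (hΨ : IsTP Ψ) : IsTP (Φ ∘ₗ Ψ) := fun ρ =>
  (hΦ _).trans (hΨ ρ)

lemma isTP_sandwich {n : ℕ} {U : Matrix (Fin n) (Fin n) ℂ}
    (hU : U ∈ Matrix.unitaryGroup (Fin n) ℂ) : IsTP (sandwich U) := fun ρ => by
  have hU' : Uᴴ * U = 1 := Matrix.mem_unitaryGroup_iff'.1 hU
  rw [sandwich_apply, Matrix.trace_mul_cycle, hU', one_mul]

lemma isCP_sandwich_comp_damping {n : ℕ} (U : Matrix (Fin n) (Fin n) ℂ) {a : ℝ} (ha : a ^ 2 ≤ 1)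
    (x y : Fin n → ℂ) : IsCP (sandwich U ∘ₗ damping a x y) := by
  rw [damping, LinearMap.comp_add, LinearMap.comp_smul, sandwich_comp, sandwich_comp]
  exact isCP_add (isCP_sandwich _) (isCP_smul (sub_nonneg.2 ha) (isCP_sandwich _))

/-- sufficient criterion for divisibility. -/
theorem sufficient_criterion_divisible (n r : ℕ) (K : Fin r → Matrix (Fin n) (Fin n) ℂ)
    (Φ : Matrix (Fin n) (Fin n) ℂ →ₗ[ℂ] Matrix (Fin n) (Fin n) ℂ)
    (hKraus : ∀ ρ, Φ ρ = ∑ j, K j * ρ * (K j)ᴴ) (hΦ : IsChannel Φ)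
    (x xp : Fin n → ℂ)
    (hx : star x ⬝ᵥ x = 1) (hxp : star xp ⬝ᵥ xp = 1) (horth : star x ⬝ᵥ xp = 0)
    (hcond : ∀ Z : Matrix (Fin n) (Fin n) ℂ, (∀ j, ((K j)ᴴ * Z).trace = 0) →
      (Φ (Matrix.vecMulVec xp (star xp)) * Z) *ᵥ x = 0 ∧
      (Φ (Matrix.vecMulVec x (star x)) * Z) *ᵥ x = 0) :
    Divisible Φ := by
  have hΦK : Φ = ∑ j, sandwich (K j) := by
    ext1 ρ
    simp [hKraus, sandwich_apply]
  simp only [hKraus] at hcond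
  obtain ⟨A, hA⟩ := exists_kraus_mul_vecMulVec_eq_sum fun Z hZ => (hcond Z hZ).2
  obtain ⟨B, hB⟩ := exists_kraus_mul_vecMulVec_eq_sum fun Z hZ => (hcond Z hZ).1
  obtain ⟨a, ha, hCP⟩ := exists_isCP_comp_damping hA hB
  rw [← hΦK] at hCP
  have ha₀ : 0 < a := by linarith
  have h1 : (1 : Matrix (Fin n) (Fin n) ℂ) ∈ Matrix.unitaryGroup (Fin n) ℂ := one_mem _
  have hid : ∀ c, sandwich 1 ∘ₗ damping c x xp = damping c x xp := fun c => by
    ext1 ρ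
    simp [sandwich_apply]
  have hfac : Φ = (Φ ∘ₗ damping a x xp) ∘ₗ damping a⁻¹ x xp := by
    rw [LinearMap.comp_assoc, damping_comp hx horth, mul_inv_cancel₀ ha₀.ne', damping_one,
      LinearMap.comp_id]
  have hTP := fun c => isTP_damping (x := x) (y := xp) hx hxp c
  by_cases hunit : IsUnitaryConj (Φ ∘ₗ damping a x xp)
  · -- `Φ` is a damping map followed by a unitary conjugation: split the damping map instead.
    obtain ⟨U, hU, hconj⟩ := hunit
    set b := (Real.sqrt a)⁻¹ with hb
    have hs : 1 < Real.sqrt a := by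
      rw [Real.lt_sqrt zero_le_one]
      linarith
    have hb₀ : 0 < b := inv_pos.2 (by linarith)
    have hb₁ : b < 1 := inv_lt_one_of_one_lt₀ hs
    have hbb : b * b = a⁻¹ := by rw [hb, ← mul_inv, Real.mul_self_sqrt ha₀.le]
    have hb2 : b ^ 2 ≤ 1 := pow_le_one₀ hb₀.le hb₁.le
    have hΦ₁ : Φ ∘ₗ damping a x xp = sandwich U := LinearMap.ext hconj
    refine ⟨sandwich U ∘ₗ damping b x xp, damping b x xp,
      ⟨isCP_sandwich_comp_damping U hb2 x xp, isTP_comp (isTP_sandwich hU) (hTP b)⟩,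
      ⟨isCP_damping hb2, hTP b⟩, ?_,
      not_isUnitaryConj_sandwich_comp_damping hx horth hb₀ hb₁ hU,
      hid b ▸ not_isUnitaryConj_sandwich_comp_damping hx horth hb₀ hb₁ h1⟩
    rw [LinearMap.comp_assoc, damping_comp hx horth, hbb, ← hΦ₁]
    exact hfac
  · have hi₀ : 0 < a⁻¹ := inv_pos.2 ha₀
    have hi₁ : a⁻¹ < 1 := inv_lt_one_of_one_lt₀ ha
    exact ⟨Φ ∘ₗ damping a x xp, damping a⁻¹ x xp, ⟨hCP, isTP_comp hΦ.2 (hTP a)⟩,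
      ⟨isCP_damping (pow_le_one₀ hi₀.le hi₁.le), hTP _⟩, hfac, hunit,
      hid a⁻¹ ▸ not_isUnitaryConj_sandwich_comp_damping hx horth hi₀ hi₁ h1⟩

end
end
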